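/- Let a > 0 and α ∈ (0, π/2), and define ψ : ℝ → E³ by ψ(θ) = a·sin α · ( θ, cosh θ, cot(α)·sinh θ ). Then for all θ ∈ ℝ: the speed is ‖ψ'(θ)‖ = a·cosh θ; the curvature is ‖ψ'(θ) × ψ''(θ)‖ / ‖ψ'(θ)‖³ = sin α/(a·cosh² θ); and the torsion is ⟨ψ'(θ) × ψ''(θ), ψ'''(θ)⟩ / ‖ψ'(θ) × ψ''(θ)‖² = cos α/(a·cosh² θ). In particular, the ratio of torsion to curvature is the constant cot α (ψ is a general helix), and writing s(θ) = a·sinh θ for the arc length (so that s'(θ) = ‖ψ'(θ)‖ and s(0) = 0), the curvature equals a·sin α/(a² + s(θ)²) and the torsion equals a·cos α/(a² + s(θ)²). -/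

import Mathlib

/-!
The curve depends on two numbers `p = a sin α` and `q = a cos α`: it is `(p θ, p cosh θ, q sinh θ)`.
Since `cosh² - sinh² = 1`, its speed and the norm of `ψ' × ψ''` are multiples of `cosh θ`, and the
triple product `⟨ψ' × ψ'', ψ'''⟩` is constant. Curvature and torsion are therefore both multiples of
`1 / cosh² θ`, and `p² + q² = a²` turns this factor into `a² / (a² + s²)` for `s = a sinh θ`.
-/

noncomputable section
open Real
open scoped RealInnerProductSpace

/-- Euclidean 3-space with the standard inner product. -/
abbrev E3 := EuclideanSpace ℝ (Fin 3)

/-- The point of `E3` with coordinates `(x, y, z)`. -/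
def vec3 (x y z : ℝ) : E3 := !₂[x, y, z]

/-- The standard cross product on `E3`. -/
def cross3 (u v : E3) : E3 :=
  vec3 (u 1 * v 2 - u 2 * v 1) (u 2 * v 0 - u 0 * v 2) (u 0 * v 1 - u 1 * v 0)

/-- The third standard basis vector `e₃` of `E3`. -/
def e₃ : E3 := EuclideanSpace.single (2 : Fin 3) (1 : ℝ)

theorem smul_vec3 (c x y z : ℝ) : c • vec3 x y z = vec3 (c * x) (c * y) (c * z) := by
  ext i
  fin_cases i <;> simp [vec3]

theorem norm_vec3 (x y z : ℝ) : ‖vec3 x y z‖ = √(x ^ 2 + y ^ 2 + z ^ 2) := by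
  simp [vec3, EuclideanSpace.norm_eq, Fin.sum_univ_three]

theorem inner_vec3 (x y z u v w : ℝ) : ⟪vec3 x y z, vec3 u v w⟫ = x * u + y * v + z * w := by
  simp [vec3, PiLp.inner_apply, Fin.sum_univ_three, mul_comm]

theorem cross3_vec3 (x y z u v w : ℝ) : cross3 (vec3 x y z) (vec3 u v w) =
    vec3 (y * w - z * v) (z * u - x * w) (x * v - y * u) := by
  simp [cross3, vec3]

theorem hasDerivAt_vec3 {f g h : ℝ → ℝ} {f' g' h' θ : ℝ} (hf : HasDerivAt f f' θ)
    (hg : HasDerivAt g g' θ) (hh : HasDerivAt h h' θ) :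
    HasDerivAt (fun t => vec3 (f t) (g t) (h t)) (vec3 f' g' h') θ := by
  have h_coord : HasDerivAt (fun t => ![f t, g t, h t]) ![f', g', h'] θ :=
    hasDerivAt_pi.2 (by simp [Fin.forall_fin_succ, hf, hg, hh])
  exact (PiLp.hasFDerivAt_toLp 2 _).comp_hasDerivAt θ h_coord

/-- The curvature of a space curve in an arbitrary parameter; its value is meaningful only where
`ψ' ≠ 0`. -/
def curvature (ψ : ℝ → E3) (θ : ℝ) : ℝ :=
  ‖cross3 (deriv ψ θ) (deriv (deriv ψ) θ)‖ / ‖deriv ψ θ‖ ^ 3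

/-- The torsion of a space curve in an arbitrary parameter; its value is meaningful only where
`ψ' × ψ'' ≠ 0`. -/
def torsion (ψ : ℝ → E3) (θ : ℝ) : ℝ :=
  ⟪cross3 (deriv ψ θ) (deriv (deriv ψ) θ), deriv (deriv (deriv ψ)) θ⟫ /
    ‖cross3 (deriv ψ θ) (deriv (deriv ψ) θ)‖ ^ 2

/-- The helix on the hyperbolic cylinder `y² / p² - z² / q² = 1` whose tangent has constant slope
`q / p` over the `xy`-plane (for `0 < p` and `q ≠ 0`). The curve `ψ` of the example is the case
`p = a sin α`, `q = a cos α`. -/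
def hyperbolicHelix (p q θ : ℝ) : E3 :=
  vec3 (p * θ) (p * cosh θ) (q * sinh θ)

section HyperbolicHelix

variable (p q : ℝ)

theorem deriv_hyperbolicHelix :
    deriv (hyperbolicHelix p q) = fun θ => vec3 p (p * sinh θ) (q * cosh θ) := by
  funext θ
  exact (hasDerivAt_vec3 (hasDerivAt_const_mul p) ((hasDerivAt_cosh θ).const_mul p)
    ((hasDerivAt_sinh θ).const_mul q)).deriv

theorem deriv_deriv_hyperbolicHelix :
    deriv (deriv (hyperbolicHelix p q)) = fun θ => vec3 0 (p * cosh θ) (q * sinh θ) := by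
  rw [deriv_hyperbolicHelix]
  funext θ
  exact (hasDerivAt_vec3 (hasDerivAt_const θ p) ((hasDerivAt_sinh θ).const_mul p)
    ((hasDerivAt_cosh θ).const_mul q)).deriv

theorem deriv_deriv_deriv_hyperbolicHelix :
    deriv (deriv (deriv (hyperbolicHelix p q))) =
      fun θ => vec3 0 (p * sinh θ) (q * cosh θ) := by
  rw [deriv_deriv_hyperbolicHelix]
  funext θ
  exact (hasDerivAt_vec3 (hasDerivAt_const θ 0) ((hasDerivAt_cosh θ).const_mul p)
    ((hasDerivAt_sinh θ).const_mul q)).deriv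

theorem cross3_deriv_hyperbolicHelix (θ : ℝ) :
    cross3 (deriv (hyperbolicHelix p q) θ) (deriv (deriv (hyperbolicHelix p q)) θ) =
      p • vec3 (-q) (-(q * sinh θ)) (p * cosh θ) := by
  rw [deriv_deriv_hyperbolicHelix, deriv_hyperbolicHelix, cross3_vec3, smul_vec3]
  congr 1
  · linear_combination (-(p * q)) * cosh_sq θ
  all_goals ring

theorem norm_deriv_hyperbolicHelix (θ : ℝ) :
    ‖deriv (hyperbolicHelix p q) θ‖ = √(p ^ 2 + q ^ 2) * cosh θ := by
  have sum_sq : p ^ 2 + (p * sinh θ) ^ 2 + (q * cosh θ) ^ 2 = (p ^ 2 + q ^ 2) * cosh θ ^ 2 := by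
    linear_combination (-p ^ 2) * cosh_sq θ
  rw [deriv_hyperbolicHelix, norm_vec3, sum_sq, sqrt_mul (by positivity), sqrt_sq (cosh_pos θ).le]

theorem norm_cross3_deriv_hyperbolicHelix (θ : ℝ) :
    ‖cross3 (deriv (hyperbolicHelix p q) θ) (deriv (deriv (hyperbolicHelix p q)) θ)‖ =
      |p| * (√(p ^ 2 + q ^ 2) * cosh θ) := by
  have sum_sq : (-q) ^ 2 + (-(q * sinh θ)) ^ 2 + (p * cosh θ) ^ 2 =
      (p ^ 2 + q ^ 2) * cosh θ ^ 2 := by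
    linear_combination (-q ^ 2) * cosh_sq θ
  rw [cross3_deriv_hyperbolicHelix, norm_smul, norm_eq_abs, norm_vec3, sum_sq,
    sqrt_mul (by positivity), sqrt_sq (cosh_pos θ).le]

theorem inner_cross3_deriv_hyperbolicHelix (θ : ℝ) :
    ⟪cross3 (deriv (hyperbolicHelix p q) θ) (deriv (deriv (hyperbolicHelix p q)) θ),
      deriv (deriv (deriv (hyperbolicHelix p q))) θ⟫ = p ^ 2 * q := by
  rw [cross3_deriv_hyperbolicHelix, deriv_deriv_deriv_hyperbolicHelix, smul_vec3, inner_vec3]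
  linear_combination (p ^ 2 * q) * cosh_sq θ

theorem curvature_hyperbolicHelix (θ : ℝ) :
    curvature (hyperbolicHelix p q) θ = |p| / ((p ^ 2 + q ^ 2) * cosh θ ^ 2) := by
  have speed_sq : (√(p ^ 2 + q ^ 2) * cosh θ) ^ 2 = (p ^ 2 + q ^ 2) * cosh θ ^ 2 := by
    rw [mul_pow, sq_sqrt (by positivity)]
  rw [curvature, norm_cross3_deriv_hyperbolicHelix, norm_deriv_hyperbolicHelix, ← speed_sq]
  field_simp

variable {p}

theorem torsion_hyperbolicHelix (hp : p ≠ 0) (θ : ℝ) :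
    torsion (hyperbolicHelix p q) θ = q / ((p ^ 2 + q ^ 2) * cosh θ ^ 2) := by
  rw [torsion, inner_cross3_deriv_hyperbolicHelix, norm_cross3_deriv_hyperbolicHelix,
    mul_pow, mul_pow, sq_abs, sq_sqrt (by positivity), mul_div_mul_left _ _ (pow_ne_zero 2 hp)]

theorem torsion_div_curvature_hyperbolicHelix (hp : p ≠ 0) (θ : ℝ) :
    torsion (hyperbolicHelix p q) θ / curvature (hyperbolicHelix p q) θ = q / |p| := by
  have denom_ne_zero : (p ^ 2 + q ^ 2) * cosh θ ^ 2 ≠ 0 := by positivity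
  rw [torsion_hyperbolicHelix q hp, curvature_hyperbolicHelix,
    div_div_div_cancel_right₀ denom_ne_zero]

end HyperbolicHelix

theorem smul_vec3_cot_eq_hyperbolicHelix (a : ℝ) {α : ℝ} (hα : sin α ≠ 0) (θ : ℝ) :
    (a * sin α) • vec3 θ (cosh θ) (cot α * sinh θ) =
      hyperbolicHelix (a * sin α) (a * cos α) θ := by
  rw [smul_vec3, hyperbolicHelix, cot_eq_cos_div_sin]
  field_simp

theorem helix_example_four_general (a α : ℝ) (ha : 0 < a) (hα : 0 < sin α) (ψ : ℝ → E3)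
    (hψ : ∀ θ, ψ θ = (a * sin α) • vec3 θ (cosh θ) (cot α * sinh θ)) (θ : ℝ) :
    ‖deriv ψ θ‖ = a * cosh θ ∧
      curvature ψ θ = sin α / (a * cosh θ ^ 2) ∧
      torsion ψ θ = cos α / (a * cosh θ ^ 2) ∧
      torsion ψ θ / curvature ψ θ = cot α ∧
      curvature ψ θ = a * sin α / (a ^ 2 + (a * sinh θ) ^ 2) ∧
      torsion ψ θ = a * cos α / (a ^ 2 + (a * sinh θ) ^ 2) := by
  obtain rfl : ψ = hyperbolicHelix (a * sin α) (a * cos α) :=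
    funext fun t => (hψ t).trans (smul_vec3_cot_eq_hyperbolicHelix a hα.ne' t)
  have hp : 0 < a * sin α := mul_pos ha hα
  have sum_sq : (a * sin α) ^ 2 + (a * cos α) ^ 2 = a ^ 2 := by
    linear_combination a ^ 2 * sin_sq_add_cos_sq α
  have sq_add_arcLength_sq : a ^ 2 + (a * sinh θ) ^ 2 = a ^ 2 * cosh θ ^ 2 := by
    linear_combination (-a ^ 2) * cosh_sq θ
  rw [torsion_div_curvature_hyperbolicHelix _ hp.ne', norm_deriv_hyperbolicHelix,
    curvature_hyperbolicHelix, torsion_hyperbolicHelix _ hp.ne', abs_of_pos hp, sum_sq,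
    sqrt_sq ha.le, sq_add_arcLength_sq, cot_eq_cos_div_sin, mul_div_mul_left _ _ ha.ne']
  refine ⟨rfl, ?_, ?_, rfl, rfl, rfl⟩ <;> field_simp

/-- Example 4: the general helix with curvature a sin α/(a² + s²) and torsion
a cos α/(a² + s²), parameterized with arc length s = a sinh θ. -/
theorem helix_example_four
    (a α : ℝ) (ha : 0 < a) (hα : α ∈ Set.Ioo (0 : ℝ) (π / 2))
    (ψ : ℝ → E3)
    (hψdef : ∀ θ, ψ θ = (a * Real.sin α) •
      vec3 θ (Real.cosh θ) (Real.cot α * Real.sinh θ)) :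
    ∀ θ : ℝ,
      ‖deriv ψ θ‖ = a * Real.cosh θ ∧
      ‖cross3 (deriv ψ θ) (deriv (deriv ψ) θ)‖ / ‖deriv ψ θ‖ ^ 3
          = Real.sin α / (a * Real.cosh θ ^ 2) ∧
      ⟪cross3 (deriv ψ θ) (deriv (deriv ψ) θ), deriv (deriv (deriv ψ)) θ⟫
          / ‖cross3 (deriv ψ θ) (deriv (deriv ψ) θ)‖ ^ 2
          = Real.cos α / (a * Real.cosh θ ^ 2) ∧
      (⟪cross3 (deriv ψ θ) (deriv (deriv ψ) θ), deriv (deriv (deriv ψ)) θ⟫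
          / ‖cross3 (deriv ψ θ) (deriv (deriv ψ) θ)‖ ^ 2)
        / (‖cross3 (deriv ψ θ) (deriv (deriv ψ) θ)‖ / ‖deriv ψ θ‖ ^ 3)
          = Real.cot α ∧
      ‖cross3 (deriv ψ θ) (deriv (deriv ψ) θ)‖ / ‖deriv ψ θ‖ ^ 3
          = a * Real.sin α / (a ^ 2 + (a * Real.sinh θ) ^ 2) ∧
      ⟪cross3 (deriv ψ θ) (deriv (deriv ψ) θ), deriv (deriv (deriv ψ)) θ⟫
          / ‖cross3 (deriv ψ θ) (deriv (deriv ψ) θ)‖ ^ 2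
          = a * Real.cos α / (a ^ 2 + (a * Real.sinh θ) ^ 2) := by
  exact helix_example_four_general a α ha
    (sin_pos_of_mem_Ioo ⟨hα.1, hα.2.trans (half_lt_self pi_pos)⟩) ψ hψdef
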